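/- Let m ∼ N(μ, Σ) on ℝⁿ with Σ positive definite, v a selection vector, y ∈ {-1,1}, z = y v'μ/√(v'Σv + 1), η = Φ(z). The mean of the probit-tilted posterior p(m) ∝ φ(m; μ, Σ)Φ(y v'm) equals μ + y Σv · φ(z)/(η √(v'Σv + 1)). -/

import Mathlib

open MeasureTheory Matrix

noncomputable def stdPdf (x : ℝ) : ℝ :=
  (Real.sqrt (2 * Real.pi))⁻¹ * Real.exp (-x ^ 2 / 2)

noncomputable def stdCdf (x : ℝ) : ℝ := ∫ u in Set.Iic x, stdPdf u

noncomputable def mvPdf {n : ℕ} (μ : Fin n → ℝ) (S : Matrix (Fin n) (Fin n) ℝ)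
    (x : Fin n → ℝ) : ℝ :=
  (Real.sqrt ((2 * Real.pi) ^ n * S.det))⁻¹ *
    Real.exp (-(1 / 2) * ((x - μ) ⬝ᵥ (S⁻¹ *ᵥ (x - μ))))

/-!
Multiplying the density of `N(μ, Σ)` by `exp (a ⬝ m)` gives, up to the factor
`exp (a ⬝ μ + a ⬝ Σ a / 2)`, the density of `N(μ + Σ a, Σ)`. Hence the moment generating function
of the tilted posterior in a direction `a` needs no new integral: at `t` it is this factor for
`t a` times the normalising constant of the posterior with prior mean `μ + t Σ a`. That constant is
`Φ(w ⬝ μ / √(w ⬝ Σ w + 1))`, the probability that an independent standard normal variable does not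
exceed `w ⬝ m ∼ N(w ⬝ μ, w ⬝ Σ w)`. The derivative at `t = 0` is the unnormalised posterior mean.
-/

section ProbitTilt

open ProbabilityTheory Set

section QuadraticForm

variable {ι : Type*} [Fintype ι]

lemma dotProduct_mulVec_comm_of_isSymm {R : Type*} [NonUnitalCommSemiring R] {A : Matrix ι ι R}
    (hA : A.IsSymm) (x y : ι → R) : x ⬝ᵥ (A *ᵥ y) = y ⬝ᵥ (A *ᵥ x) := by
  rw [dotProduct_mulVec, ← mulVec_transpose, hA.eq, dotProduct_comm]

lemma integral_exp_neg_half_dotProduct_self :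
    ∫ x : ι → ℝ, Real.exp (-(1 / 2) * (x ⬝ᵥ x)) = √((2 * Real.pi) ^ Fintype.card ι) := by
  have hprod (x : ι → ℝ) :
      Real.exp (-(1 / 2) * (x ⬝ᵥ x)) = ∏ i, Real.exp (-(1 / 2) * x i ^ 2) := by
    simp only [← Real.exp_sum, ← Finset.mul_sum, dotProduct, sq]
  simp_rw [hprod]
  rw [integral_fintype_prod_volume_eq_pow (fun x : ℝ ↦ Real.exp (-(1 / 2) * x ^ 2)),
    integral_gaussian, div_div_eq_mul_div, div_one, mul_comm]
  rw [eq_comm, Real.sqrt_eq_iff_eq_sq (by positivity) (by positivity), pow_right_comm,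
    Real.sq_sqrt (by positivity)]

variable [DecidableEq ι]

lemma integral_comp_mulVec {E : Type*} [NormedAddCommGroup E] [NormedSpace ℝ E]
    {A : Matrix ι ι ℝ} (hA : A.det ≠ 0) (f : (ι → ℝ) → E) :
    ∫ x, f (A *ᵥ x) = |A.det|⁻¹ • ∫ x, f x := by
  have hinj : Function.Injective A.toLin' :=
    mulVec_injective_of_isUnit ((isUnit_iff_isUnit_det A).2 hA.isUnit)
  have hemb : MeasurableEmbedding A.toLin' :=
    (LinearMap.isClosedEmbedding_of_injective (LinearMap.ker_eq_bot.2 hinj)).measurableEmbedding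
  calc ∫ x, f (A *ᵥ x) = ∫ x, f x ∂volume.map A.toLin' := (hemb.integral_map f).symm
    _ = |A.det|⁻¹ • ∫ x, f x := by
      rw [Real.map_matrix_volume_pi_eq_smul_volume_pi hA, integral_smul_measure,
        ENNReal.toReal_ofReal (abs_nonneg _), abs_inv]

lemma integral_exp_neg_half_dotProduct_mulVec {P : Matrix ι ι ℝ} (hP : P.PosDef) :
    ∫ x, Real.exp (-(1 / 2) * (x ⬝ᵥ (P *ᵥ x))) = √((2 * Real.pi) ^ Fintype.card ι / P.det) := by
  obtain ⟨B, rfl⟩ : ∃ B : Matrix ι ι ℝ, P = Bᵀ * B := by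
    open scoped MatrixOrder in
    simpa [star_eq_conjTranspose] using
      CStarAlgebra.nonneg_iff_eq_star_mul_self.mp hP.posSemidef.nonneg
  have hdet : (Bᵀ * B).det = B.det ^ 2 := by rw [det_mul, det_transpose, sq]
  have hB : B.det ≠ 0 := fun h ↦ by simpa [hdet, h] using hP.det_pos
  have hquad (x : ι → ℝ) : x ⬝ᵥ ((Bᵀ * B) *ᵥ x) = (B *ᵥ x) ⬝ᵥ (B *ᵥ x) := by
    rw [← mulVec_mulVec, dotProduct_mulVec, vecMul_transpose]
  simp_rw [hquad]
  rw [integral_comp_mulVec hB (fun y ↦ Real.exp (-(1 / 2) * (y ⬝ᵥ y))),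
    integral_exp_neg_half_dotProduct_self, hdet, Real.sqrt_div (by positivity),
    Real.sqrt_sq_eq_abs, smul_eq_mul, inv_mul_eq_div]

end QuadraticForm

section StdCdf

lemma stdPdf_eq_gaussianPDFReal : stdPdf = gaussianPDFReal 0 1 := by
  ext x
  simp [stdPdf, gaussianPDFReal]

lemma stdPdf_pos (x : ℝ) : 0 < stdPdf x := by
  unfold stdPdf
  positivity

lemma integrable_stdPdf : Integrable stdPdf :=
  stdPdf_eq_gaussianPDFReal ▸ integrable_gaussianPDFReal 0 1

lemma stdCdf_eq_cdf : stdCdf = cdf (gaussianReal 0 1) := by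
  ext x
  rw [cdf_eq_real, measureReal_def, gaussianReal_apply_eq_integral _ one_ne_zero,
    ← stdPdf_eq_gaussianPDFReal,
    ENNReal.toReal_ofReal (setIntegral_nonneg measurableSet_Iic fun u _ ↦ (stdPdf_pos u).le),
    stdCdf]

lemma stdCdf_nonneg (x : ℝ) : 0 ≤ stdCdf x :=
  stdCdf_eq_cdf ▸ cdf_nonneg _ x

lemma stdCdf_le_one (x : ℝ) : stdCdf x ≤ 1 :=
  stdCdf_eq_cdf ▸ cdf_le_one _ x

lemma measurable_stdCdf : Measurable stdCdf :=
  stdCdf_eq_cdf ▸ (monotone_cdf _).measurable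

lemma stdCdf_pos (x : ℝ) : 0 < stdCdf x := by
  rw [stdCdf, setIntegral_pos_iff_support_of_nonneg_ae (ae_of_all _ fun u ↦ (stdPdf_pos u).le)
    integrable_stdPdf.integrableOn, Function.support_eq_univ fun u ↦ (stdPdf_pos u).ne']
  simp

lemma hasDerivAt_stdCdf (x : ℝ) : HasDerivAt stdCdf (stdPdf x) x := by
  have hcont : Continuous stdPdf := by
    unfold stdPdf
    fun_prop
  have hsplit : stdCdf = fun x ↦ stdCdf 0 + ∫ u in (0 : ℝ)..x, stdPdf u := by
    ext x
    rw [← intervalIntegral.integral_Iic_sub_Iic integrable_stdPdf.integrableOn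
      integrable_stdPdf.integrableOn, stdCdf, stdCdf, add_sub_cancel]
  rw [hsplit]
  exact (hcont.integral_hasStrictDerivAt 0 x).hasDerivAt.const_add _

lemma cdf_gaussianReal (a : ℝ) {V : NNReal} (hV : V ≠ 0) (x : ℝ) :
    cdf (gaussianReal a V) x = stdCdf ((x - a) / √V) := by
  have hs : 0 < √(V : ℝ) := Real.sqrt_pos.2 (by positivity)
  have hstd : ((gaussianReal a V).map (· - a)).map (· / √V) = gaussianReal 0 1 := by
    rw [gaussianReal_map_sub_const, gaussianReal_map_div_const, sub_self, zero_div]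
    congr 1
    ext
    simp [hV]
  rw [stdCdf_eq_cdf, cdf_eq_real, cdf_eq_real, ← hstd,
    map_measureReal_apply (by fun_prop) measurableSet_Iic,
    map_measureReal_apply (by fun_prop) (measurableSet_Iic.preimage (by fun_prop))]
  congr 1
  ext u
  simp [div_le_div_iff_of_pos_right hs]

/- For independent `X ∼ P` and `Y ∼ Q`, both sides are the probability of `Y ≤ X`. -/
lemma integral_cdf_eq_cdf_conv (P Q : Measure ℝ) [IsProbabilityMeasure P] [IsProbabilityMeasure Q] :
    ∫ x, cdf Q x ∂P = cdf (P.map (fun x ↦ -x) ∗ Q) 0 := by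
  have hneg : IsProbabilityMeasure (P.map fun x ↦ -x) :=
    Measure.isProbabilityMeasure_map (by fun_prop)
  have hslice (x : ℝ) : Prod.mk x ⁻¹' ((fun p : ℝ × ℝ ↦ p.1 + p.2) ⁻¹' Iic 0) = Iic (-x) := by
    ext u
    simp [le_neg_iff_add_nonpos_left]
  have hcdf : Measurable (cdf Q) := (monotone_cdf Q).measurable
  calc ∫ x, cdf Q x ∂P = (∫⁻ x, ENNReal.ofReal (cdf Q x) ∂P).toReal :=
        integral_eq_lintegral_of_nonneg_ae (ae_of_all _ (cdf_nonneg Q)) hcdf.aestronglyMeasurable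
    _ = (∫⁻ x, Q (Iic (-x)) ∂P.map (fun x ↦ -x)).toReal := by
      simp_rw [← ofReal_cdf]
      rw [lintegral_map (by fun_prop) (by fun_prop)]
      simp only [neg_neg]
    _ = cdf (P.map (fun x ↦ -x) ∗ Q) 0 := by
      rw [cdf_eq_real, measureReal_def, Measure.conv,
        Measure.map_apply (by fun_prop) measurableSet_Iic,
        Measure.prod_apply (measurableSet_Iic.preimage (by fun_prop))]
      simp_rw [hslice]

lemma integral_stdCdf_gaussianReal (b : ℝ) (V : NNReal) :
    ∫ x, stdCdf x ∂gaussianReal b V = stdCdf (b / √(V + 1)) := by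
  rw [stdCdf_eq_cdf, integral_cdf_eq_cdf_conv, gaussianReal_map_neg, gaussianReal_conv_gaussianReal,
    cdf_gaussianReal _ (by positivity), stdCdf_eq_cdf]
  simp

end StdCdf

section MomentGenerating

variable {Ω : Type*} {mΩ : MeasurableSpace Ω} {P : Measure Ω} {X : Ω → ℝ}

lemma map_eq_gaussianReal_of_mgf {b : ℝ} {V : NNReal}
    (h : mgf X P = fun t ↦ Real.exp (b * t + V * t ^ 2 / 2)) : P.map X = gaussianReal b V := by
  have : IsProbabilityMeasure P := by
    rw [isProbabilityMeasure_iff_real, ← mgf_zero' (X := X), h]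
    simp
  have hmgf : mgf X P = mgf id (gaussianReal b V) := by rw [h, mgf_id_gaussianReal]
  have hset : integrableExpSet X P = univ := by
    rw [integrableExpSet_eq_of_mgf hmgf, integrableExpSet_id_gaussianReal]
  have hX : AEMeasurable X P :=
    aemeasurable_of_mem_interior_integrableExpSet (v := 0) (by simp [hset])
  have hcomplex : complexMGF X P = complexMGF id (gaussianReal b V) := by
    simpa [hset, eqOn_univ] using eqOn_complexMGF_of_mgf hmgf
  simpa using Measure.ext_of_complexMGF_eq hX aemeasurable_id hcomplex

lemma hasDerivAt_integral_exp_mul_mul_zero {g : Ω → ℝ} {C : ℝ}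
    (hX : 0 ∈ interior (integrableExpSet X P)) (hg : Measurable g) (hg_nonneg : ∀ ω, 0 ≤ g ω)
    (hg_le : ∀ ω, g ω ≤ C) :
    HasDerivAt (fun t ↦ ∫ ω, Real.exp (t * X ω) * g ω ∂P) (∫ ω, X ω * g ω ∂P) 0 := by
  set Q := P.withDensity fun ω ↦ ENNReal.ofReal (g ω)
  have hintegral (f : Ω → ℝ) : ∫ ω, f ω ∂Q = ∫ ω, f ω * g ω ∂P := by
    rw [integral_withDensity_eq_integral_toReal_smul (by fun_prop) (by simp)]
    simp only [ENNReal.toReal_ofReal (hg_nonneg _), smul_eq_mul, mul_comm]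
  have hsubset : integrableExpSet X P ⊆ integrableExpSet X Q := fun t ht ↦ by
    refine (integrable_withDensity_iff (by fun_prop) (by simp)).2 ?_
    simp only [ENNReal.toReal_ofReal (hg_nonneg _)]
    exact Integrable.mul_bdd (c := C) ht hg.aestronglyMeasurable
      (ae_of_all _ fun ω ↦ by simpa [abs_of_nonneg (hg_nonneg ω)] using hg_le ω)
  have hmgf : mgf X Q = fun t ↦ ∫ ω, Real.exp (t * X ω) * g ω ∂P :=
    funext fun t ↦ hintegral _
  simpa [hmgf, hintegral] using hasDerivAt_mgf (interior_mono hsubset hX)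

end MomentGenerating

section MvGaussian

variable {n : ℕ} {S : Matrix (Fin n) (Fin n) ℝ}

lemma mvPdf_nonneg (μ : Fin n → ℝ) (S : Matrix (Fin n) (Fin n) ℝ) (x : Fin n → ℝ) :
    0 ≤ mvPdf μ S x := by
  unfold mvPdf
  positivity

lemma integral_mvPdf (hS : S.PosDef) (μ : Fin n → ℝ) : ∫ x, mvPdf μ S x = 1 := by
  have hconst : √((2 * Real.pi) ^ n * S.det) ≠ 0 :=
    (Real.sqrt_pos.2 (mul_pos (by positivity) hS.det_pos)).ne'
  simp only [mvPdf]
  rw [integral_const_mul,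
    integral_sub_right_eq_self (fun x ↦ Real.exp (-(1 / 2) * (x ⬝ᵥ (S⁻¹ *ᵥ x)))),
    integral_exp_neg_half_dotProduct_mulVec hS.inv, Fintype.card_fin, det_nonsing_inv,
    Ring.inverse_eq_inv', div_inv_eq_mul, inv_mul_cancel₀ hconst]

lemma exp_dotProduct_mul_mvPdf (hS : S.PosDef) (μ a m : Fin n → ℝ) :
    Real.exp (a ⬝ᵥ m) * mvPdf μ S m =
      Real.exp (a ⬝ᵥ μ + a ⬝ᵥ (S *ᵥ a) / 2) * mvPdf (μ + S *ᵥ a) S m := by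
  have hdet : IsUnit S.det := hS.det_pos.ne'.isUnit
  have hsymm : S⁻¹.IsSymm := by simpa [IsSymm] using hS.inv.isHermitian.eq
  obtain ⟨x, rfl⟩ : ∃ x, m = μ + x := ⟨m - μ, by simp⟩
  have hcancel : S⁻¹ *ᵥ (S *ᵥ a) = a := by
    rw [mulVec_mulVec, nonsing_inv_mul _ hdet, one_mulVec]
  have hsquare : (x - S *ᵥ a) ⬝ᵥ (S⁻¹ *ᵥ (x - S *ᵥ a)) =
      x ⬝ᵥ (S⁻¹ *ᵥ x) - 2 * (a ⬝ᵥ x) + a ⬝ᵥ (S *ᵥ a) := by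
    rw [mulVec_sub, hcancel, sub_dotProduct, dotProduct_sub, dotProduct_sub,
      dotProduct_mulVec_comm_of_isSymm hsymm (S *ᵥ a) x, hcancel, dotProduct_comm x a,
      dotProduct_comm (S *ᵥ a) a]
    ring
  simp only [mvPdf, add_sub_add_left_eq_sub, add_sub_cancel_left, hsquare, dotProduct_add]
  rw [mul_left_comm, mul_left_comm (Real.exp _), ← Real.exp_add, ← Real.exp_add]
  ring_nf

/-- The Gaussian distribution `N(μ, S)` on `Fin n → ℝ`, defined by its density `mvPdf μ S`; this
is a probability measure when `S` is positive definite. -/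
noncomputable def mvGaussian (μ : Fin n → ℝ) (S : Matrix (Fin n) (Fin n) ℝ) :
    Measure (Fin n → ℝ) :=
  volume.withDensity fun m ↦ ENNReal.ofReal (mvPdf μ S m)

lemma integral_mvGaussian (μ : Fin n → ℝ) (S : Matrix (Fin n) (Fin n) ℝ) (g : (Fin n → ℝ) → ℝ) :
    ∫ m, g m ∂mvGaussian μ S = ∫ m, mvPdf μ S m * g m := by
  have hmeas : Measurable fun m ↦ ENNReal.ofReal (mvPdf μ S m) := by
    unfold mvPdf
    fun_prop
  rw [mvGaussian, integral_withDensity_eq_integral_toReal_smul hmeas (by simp)]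
  simp only [ENNReal.toReal_ofReal (mvPdf_nonneg μ S _), smul_eq_mul]

lemma integral_exp_dotProduct_mul_mvGaussian (hS : S.PosDef) (μ a : Fin n → ℝ)
    (g : (Fin n → ℝ) → ℝ) :
    ∫ m, Real.exp (a ⬝ᵥ m) * g m ∂mvGaussian μ S =
      Real.exp (a ⬝ᵥ μ + a ⬝ᵥ (S *ᵥ a) / 2) * ∫ m, g m ∂mvGaussian (μ + S *ᵥ a) S := by
  rw [integral_mvGaussian, integral_mvGaussian, ← integral_const_mul]
  congr with m
  linear_combination g m * exp_dotProduct_mul_mvPdf hS μ a m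

lemma mgf_dotProduct_mvGaussian (hS : S.PosDef) (μ a : Fin n → ℝ) (t : ℝ) :
    mgf (fun m ↦ a ⬝ᵥ m) (mvGaussian μ S) t =
      Real.exp (a ⬝ᵥ μ * t + a ⬝ᵥ (S *ᵥ a) * t ^ 2 / 2) := by
  have h := integral_exp_dotProduct_mul_mvGaussian hS μ (t • a) fun _ ↦ 1
  simp only [integral_mvGaussian _ _ fun _ ↦ 1, mul_one, integral_mvPdf hS, smul_dotProduct,
    mulVec_smul, dotProduct_smul, smul_eq_mul] at h
  rw [mgf, h]
  ring_nf

lemma integrableExpSet_dotProduct_mvGaussian (hS : S.PosDef) (μ a : Fin n → ℝ) :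
    integrableExpSet (fun m ↦ a ⬝ᵥ m) (mvGaussian μ S) = univ :=
  eq_univ_of_forall fun t ↦ .of_integral_ne_zero <| by
    rw [← mgf, mgf_dotProduct_mvGaussian hS]
    positivity

lemma map_dotProduct_mvGaussian (hS : S.PosDef) (μ a : Fin n → ℝ) :
    (mvGaussian μ S).map (fun m ↦ a ⬝ᵥ m) =
      gaussianReal (a ⬝ᵥ μ) (a ⬝ᵥ (S *ᵥ a)).toNNReal := by
  have ha : 0 ≤ a ⬝ᵥ (S *ᵥ a) := by simpa using hS.posSemidef.dotProduct_mulVec_nonneg a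
  refine map_eq_gaussianReal_of_mgf (funext fun t ↦ ?_)
  rw [mgf_dotProduct_mvGaussian hS, Real.coe_toNNReal _ ha]

lemma integral_stdCdf_dotProduct_mvGaussian (hS : S.PosDef) (μ w : Fin n → ℝ) :
    ∫ m, stdCdf (w ⬝ᵥ m) ∂mvGaussian μ S = stdCdf (w ⬝ᵥ μ / √(w ⬝ᵥ (S *ᵥ w) + 1)) := by
  have hw : 0 ≤ w ⬝ᵥ (S *ᵥ w) := by simpa using hS.posSemidef.dotProduct_mulVec_nonneg w
  rw [← integral_map (φ := fun m ↦ w ⬝ᵥ m) (by fun_prop) measurable_stdCdf.aestronglyMeasurable,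
    map_dotProduct_mvGaussian hS, integral_stdCdf_gaussianReal, Real.coe_toNNReal _ hw]

lemma integral_exp_mul_stdCdf_dotProduct_mvGaussian (hS : S.PosDef) (μ a w : Fin n → ℝ) (t : ℝ) :
    ∫ m, Real.exp (t * (a ⬝ᵥ m)) * stdCdf (w ⬝ᵥ m) ∂mvGaussian μ S =
      Real.exp (t * (a ⬝ᵥ μ) + t ^ 2 * (a ⬝ᵥ (S *ᵥ a) / 2)) *
        stdCdf ((w ⬝ᵥ μ + t * (a ⬝ᵥ (S *ᵥ w))) / √(w ⬝ᵥ (S *ᵥ w) + 1)) := by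
  have hsymm : S.IsSymm := by simpa [IsSymm] using hS.isHermitian.eq
  have h := integral_exp_dotProduct_mul_mvGaussian hS μ (t • a) fun m ↦ stdCdf (w ⬝ᵥ m)
  simp only [integral_stdCdf_dotProduct_mvGaussian hS, smul_dotProduct, mulVec_smul,
    dotProduct_smul, dotProduct_add, smul_eq_mul] at h
  rw [h, dotProduct_mulVec_comm_of_isSymm hsymm w a]
  ring_nf

lemma integral_dotProduct_mul_stdCdf_mvGaussian (hS : S.PosDef) (μ a w : Fin n → ℝ) :
    ∫ m, (a ⬝ᵥ m) * stdCdf (w ⬝ᵥ m) ∂mvGaussian μ S =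
      a ⬝ᵥ μ * stdCdf (w ⬝ᵥ μ / √(w ⬝ᵥ (S *ᵥ w) + 1)) +
        a ⬝ᵥ (S *ᵥ w) * stdPdf (w ⬝ᵥ μ / √(w ⬝ᵥ (S *ᵥ w) + 1)) / √(w ⬝ᵥ (S *ᵥ w) + 1) := by
  set s := √(w ⬝ᵥ (S *ᵥ w) + 1) with hs
  have hmgf := hasDerivAt_integral_exp_mul_mul_zero
    (X := fun m ↦ a ⬝ᵥ m) (P := mvGaussian μ S) (g := fun m ↦ stdCdf (w ⬝ᵥ m))
    (by simp [integrableExpSet_dotProduct_mvGaussian hS]) (measurable_stdCdf.comp (by fun_prop))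
    (fun _ ↦ stdCdf_nonneg _) (fun _ ↦ stdCdf_le_one _)
  simp only [integral_exp_mul_stdCdf_dotProduct_mvGaussian hS, ← hs] at hmgf
  have hexponent : HasDerivAt (fun t ↦ t * (a ⬝ᵥ μ) + t ^ 2 * (a ⬝ᵥ (S *ᵥ a) / 2)) (a ⬝ᵥ μ) 0 := by
    simpa using ((hasDerivAt_id (0 : ℝ)).mul_const (a ⬝ᵥ μ)).fun_add
      (((hasDerivAt_id (0 : ℝ)).pow 2).mul_const (a ⬝ᵥ (S *ᵥ a) / 2))
  have hargument : HasDerivAt (fun t ↦ (w ⬝ᵥ μ + t * (a ⬝ᵥ (S *ᵥ w))) / s)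
      (a ⬝ᵥ (S *ᵥ w) / s) 0 := by
    simpa using (((hasDerivAt_id (0 : ℝ)).mul_const (a ⬝ᵥ (S *ᵥ w))).const_add (w ⬝ᵥ μ)).div_const s
  have hformula := hexponent.exp.mul ((hasDerivAt_stdCdf _).comp 0 hargument)
  rw [hmgf.unique hformula]
  simp only [Function.comp_apply, zero_mul, zero_pow two_ne_zero, add_zero, Real.exp_zero, one_mul,
    add_right_inj]
  ring

end MvGaussian

end ProbitTilt

theorem stmt13_general {n : ℕ} (μ : Fin n → ℝ) (S : Matrix (Fin n) (Fin n) ℝ)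
    (hS : S.PosDef) (v : Fin n → ℝ) (y : ℝ)
    (z : ℝ) (hz : z = y * (v ⬝ᵥ μ) / √(y ^ 2 * (v ⬝ᵥ (S *ᵥ v)) + 1))
    (η : ℝ) (hη : η = stdCdf z)
    (Z : ℝ) (hZ : Z = ∫ m : Fin n → ℝ, mvPdf μ S m * stdCdf (y * (v ⬝ᵥ m)))
    (p : (Fin n → ℝ) → ℝ)
    (hp : p = fun m ↦ Z⁻¹ * mvPdf μ S m * stdCdf (y * (v ⬝ᵥ m))) (j : Fin n) :
    ∫ m : Fin n → ℝ, m j * p m =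
      μ j + y * (S *ᵥ v) j * stdPdf z / (η * √(y ^ 2 * (v ⬝ᵥ (S *ᵥ v)) + 1)) := by
  have hyv (m : Fin n → ℝ) : y * (v ⬝ᵥ m) = (y • v) ⬝ᵥ m := (smul_dotProduct y v m).symm
  have hvar : (y • v) ⬝ᵥ (S *ᵥ (y • v)) = y ^ 2 * (v ⬝ᵥ (S *ᵥ v)) := by
    simp only [mulVec_smul, smul_dotProduct, dotProduct_smul, smul_eq_mul]
    ring
  have hZη : Z = η := by
    simp_rw [hZ, hyv]
    rw [← integral_mvGaussian, integral_stdCdf_dotProduct_mvGaussian hS, hvar, ← hyv, ← hz, hη]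
  have hη0 : η ≠ 0 := hη ▸ (stdCdf_pos z).ne'
  have hmoment := integral_dotProduct_mul_stdCdf_mvGaussian hS μ (Pi.single j 1) (y • v)
  rw [hvar, ← hyv, ← hz, ← hη] at hmoment
  simp only [← hyv, single_one_dotProduct, mulVec_smul, Pi.smul_apply, smul_eq_mul] at hmoment
  calc ∫ m : Fin n → ℝ, m j * p m
      = Z⁻¹ * ∫ m, m j * stdCdf (y * (v ⬝ᵥ m)) ∂mvGaussian μ S := by
        rw [integral_mvGaussian, ← integral_const_mul]
        congr with m
        simp only [hp]
        ring
    _ = _ := by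
        rw [hmoment, hZη]
        field_simp

/-- Mean of the probit-tilted multivariate Gaussian posterior
`p(m) ∝ φ(m; μ, Σ)Φ(y v'm)` equals `μ + y Σv φ(z)/(η √(v'Σv+1))`,
where `z = y v'μ/√(v'Σv+1)` and `η = Φ(z)`. -/
theorem stmt13 {n : ℕ} (μ : Fin n → ℝ) (S : Matrix (Fin n) (Fin n) ℝ)
    (hS : S.PosDef) (v : Fin n → ℝ) (hv : ∃ i, v = Pi.single i 1)
    (y : ℝ) (hy : y = -1 ∨ y = 1)
    (z : ℝ) (hz : z = y * (v ⬝ᵥ μ) / Real.sqrt (v ⬝ᵥ (S *ᵥ v) + 1))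
    (η : ℝ) (hη : η = stdCdf z)
    (Z : ℝ) (hZ : Z = ∫ m : Fin n → ℝ, mvPdf μ S m * stdCdf (y * (v ⬝ᵥ m)))
    (p : (Fin n → ℝ) → ℝ)
    (hp : p = fun m => Z⁻¹ * mvPdf μ S m * stdCdf (y * (v ⬝ᵥ m))) :
    ∀ j, (∫ m : Fin n → ℝ, m j * p m) =
      μ j + y * (S *ᵥ v) j * stdPdf z / (η * Real.sqrt (v ⬝ᵥ (S *ᵥ v) + 1)) := by
  have hy2 : y ^ 2 = 1 := by rcases hy with rfl | rfl <;> norm_num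
  simpa [hy2] using stmt13_general μ S hS v y z (by simpa [hy2] using hz) η hη Z hZ p hp
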